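/- Let α ∈ (0,1], δ ∈ {0,1}, c_H > 0, and let u : ℝ → ℝ be a 2π-periodic function with |u(y) − u(y')| ≤ c_H |y − y'|^α for all y, y' ∈ ℝ. Set β = 1/(α+2). There exists a constant C ≥ 1, depending only on α, c_H and δ, such that for every κ ∈ (0,1), every solution ρ of the shear advection–diffusion equation with initial datum ρ₀(x,y) = φ_{κ,β}(y) sin x satisfies κ ∫₀ᵗ ‖∇_δ ρ(s)‖²_{L²} ds ≤ C ‖ρ₀‖²_{L²} κ^{α/(α+2)} t for all 0 ≤ t ≤ κ^{−α/(α+2)}. -/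

import Mathlib

/-!
Compare `ρ` with the datum transported at the constant speed `u 0`, namely
`ψ(t,x,y) = φ(y) sin(x - u(0) t)`, where `φ` is the tent of half-width `h = κ^β`. Let
`N = ‖ρ₀‖² = ‖ψ(t)‖²`. Since `½ ‖ρ - ψ‖² = ½ ‖ρ‖² - ⟨ρ, ψ⟩ + ½ N` is nonnegative and vanishes at
`t = 0`, it suffices to show that its time derivative is at most `-(κ/2) ‖∇_δ ρ‖² + K` with
`K ≲ κ^{α/(α+2)} N`, and to integrate.

The energy identity (`Slice.energy`) gives `d/dt ½ ‖ρ‖² = -κ ‖∇_δ ρ‖²`. For the pairing,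
integration by parts in `x` leaves
`d/dt ⟨ρ, ψ⟩ = ⟨ρ, (u - u(0)) ∂ₓψ⟩ - κ δ ⟨∂ₓρ, ∂ₓψ⟩ + κ ⟨∂ᵧᵧρ, ψ⟩` (`Slice.pairing_ge`).
On the support of `φ` the Hölder condition bounds `|u - u(0)|` by `c_H h^α = c_H κ^{α/(α+2)}`
(`shear_mul_tent_le`), and `‖ρ‖² ≤ N`. The diffusive terms are absorbed into half of the dissipation
by Young's inequality, at the cost of `κ N / 2` and of `κ π / h` (`tent_second_deriv_ge`); the latter
is at most `3 κ h⁻² N = 3 κ^{α/(α+2)} N` because `N ≥ π h / 3`. The resulting constant is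
`2 c_H + 7`, and the bound holds for all times.

Joint continuity of the first spatial derivatives, needed for Fubini's theorem, is recovered from
that of `ρ` and of the second derivatives (`continuous_deriv_of_second`).
-/

open MeasureTheory Real Set Filter

noncomputable section

/-- `ρ : ℝ → ℝ → ℝ → ℝ`, as `ρ t x y`, is a solution of the shear advection–diffusion
equation `∂ₜρ + u(y) ∂ₓρ = κ (δ ∂ₓₓρ + ∂ᵧᵧρ)` on `[0,∞) × 𝕋²` (2π-periodic in `x` and `y`),
continuous up to `t = 0`, C¹ in time and C² in space for `t > 0`. -/
structure IsShearSolution (δ κ : ℝ) (u : ℝ → ℝ) (ρ : ℝ → ℝ → ℝ → ℝ) : Prop where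
  cont : ContinuousOn (fun p : ℝ × ℝ × ℝ => ρ p.1 p.2.1 p.2.2) {p : ℝ × ℝ × ℝ | 0 ≤ p.1}
  periodic_x : ∀ t x y, ρ t (x + 2 * π) y = ρ t x y
  periodic_y : ∀ t x y, ρ t x (y + 2 * π) = ρ t x y
  diff_t : ∀ t, 0 < t → ∀ x y, DifferentiableAt ℝ (fun s => ρ s x y) t
  diff_x : ∀ t, 0 < t → ∀ x y, DifferentiableAt ℝ (fun a => ρ t a y) x
  diff_xx : ∀ t, 0 < t → ∀ x y, DifferentiableAt ℝ (fun a => deriv (fun b => ρ t b y) a) x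
  diff_y : ∀ t, 0 < t → ∀ x y, DifferentiableAt ℝ (fun b => ρ t x b) y
  diff_yy : ∀ t, 0 < t → ∀ x y, DifferentiableAt ℝ (fun b => deriv (fun c => ρ t x c) b) y
  cont_dt : ContinuousOn (fun p : ℝ × ℝ × ℝ => deriv (fun s => ρ s p.2.1 p.2.2) p.1)
      {p : ℝ × ℝ × ℝ | 0 < p.1}
  cont_dxx : ContinuousOn
      (fun p : ℝ × ℝ × ℝ => deriv (fun a => deriv (fun b => ρ p.1 b p.2.2) a) p.2.1)
      {p : ℝ × ℝ × ℝ | 0 < p.1}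
  cont_dyy : ContinuousOn
      (fun p : ℝ × ℝ × ℝ => deriv (fun b => deriv (fun c => ρ p.1 p.2.1 c) b) p.2.2)
      {p : ℝ × ℝ × ℝ | 0 < p.1}
  pde : ∀ t, 0 < t → ∀ x y,
    deriv (fun s => ρ s x y) t + u y * deriv (fun a => ρ t a y) x =
      κ * (δ * deriv (fun a => deriv (fun b => ρ t b y) a) x +
        deriv (fun b => deriv (fun c => ρ t x c) b) y)

/-- The squared `L²` norm of `ρ(t)` on the torus `[0,2π]²`. -/
def l2normSq (ρ : ℝ → ℝ → ℝ → ℝ) (t : ℝ) : ℝ :=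
  ∫ x in (0:ℝ)..(2 * π), ∫ y in (0:ℝ)..(2 * π), (ρ t x y) ^ 2

/-- The squared `L²` norm of the (partial) gradient `∇_δ ρ(t) = (δ ∂ₓρ, ∂ᵧρ)` on the torus. -/
def gradDeltaNormSq (δ : ℝ) (ρ : ℝ → ℝ → ℝ → ℝ) (t : ℝ) : ℝ :=
  ∫ x in (0:ℝ)..(2 * π), ∫ y in (0:ℝ)..(2 * π),
    (δ * (deriv (fun a => ρ t a y) x) ^ 2 + (deriv (fun b => ρ t x b) y) ^ 2)

/-- Reduction of `y` to the fundamental domain `[-π, π)`. -/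
def mod2pi (y : ℝ) : ℝ := y - 2 * π * ⌊(y + π) / (2 * π)⌋

/-- The 2π-periodic tent function `φ_{κ,β}`: equal to `(κ^β - |y|)/κ^β` for `|y| ≤ κ^β`
(within the fundamental domain) and `0` elsewhere. -/
def tentPer (κ β : ℝ) (y : ℝ) : ℝ :=
  if |mod2pi y| ≤ κ ^ β then (κ ^ β - |mod2pi y|) / κ ^ β else 0

/-! ### Integration over the torus -/

/-- Iterated integral over one period cell `[0,2π]²`, in the order used by `l2normSq` and
`gradDeltaNormSq`. -/
def torusInt (f : ℝ → ℝ → ℝ) : ℝ :=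
  ∫ x in (0:ℝ)..(2 * π), ∫ y in (0:ℝ)..(2 * π), f x y

/-- Joint continuity of a function of two real variables. -/
def Cont2 (f : ℝ → ℝ → ℝ) : Prop := Continuous fun p : ℝ × ℝ => f p.1 p.2

lemma Cont2.swap {f : ℝ → ℝ → ℝ} (hf : Cont2 f) : Cont2 fun y x => f x y :=
  Continuous.comp (g := fun p : ℝ × ℝ => f p.1 p.2) hf continuous_swap

lemma Cont2.mul {f g : ℝ → ℝ → ℝ} (hf : Cont2 f) (hg : Cont2 g) :
    Cont2 fun x y => f x y * g x y := Continuous.mul hf hg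

lemma Cont2.add {f g : ℝ → ℝ → ℝ} (hf : Cont2 f) (hg : Cont2 g) :
    Cont2 fun x y => f x y + g x y := Continuous.add hf hg

lemma Cont2.const_mul {f : ℝ → ℝ → ℝ} (c : ℝ) (hf : Cont2 f) :
    Cont2 fun x y => c * f x y := Continuous.mul continuous_const hf

/-- Lebesgue measure on the half-open period cell. -/
def cellMeasure : Measure (ℝ × ℝ) :=
  (volume.restrict (Ioc 0 (2 * π))).prod (volume.restrict (Ioc 0 (2 * π)))

lemma cellMeasure_eq :
    cellMeasure = (volume : Measure (ℝ × ℝ)).restrict (Ioc 0 (2 * π) ×ˢ Ioc 0 (2 * π)) := by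
  rw [cellMeasure, Measure.prod_restrict]; rfl

instance : IsFiniteMeasure cellMeasure := by unfold cellMeasure; infer_instance

lemma Cont2.integrable {f : ℝ → ℝ → ℝ} (hf : Cont2 f) :
    Integrable (fun p : ℝ × ℝ => f p.1 p.2) cellMeasure := by
  rw [cellMeasure_eq]
  have : IntegrableOn (fun p : ℝ × ℝ => f p.1 p.2) (Icc 0 (2 * π) ×ˢ Icc 0 (2 * π)) volume :=
    hf.continuousOn.integrableOn_compact (isCompact_Icc.prod isCompact_Icc)
  exact this.mono_set (prod_mono Ioc_subset_Icc_self Ioc_subset_Icc_self)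

lemma torusInt_eq {f : ℝ → ℝ → ℝ} (hf : Cont2 f) :
    torusInt f = ∫ p, f p.1 p.2 ∂cellMeasure := by
  have h2 : (0:ℝ) ≤ 2 * π := by positivity
  rw [torusInt, cellMeasure, integral_prod _ hf.integrable, intervalIntegral.integral_of_le h2]
  simp_rw [intervalIntegral.integral_of_le h2]

lemma torusInt_swap {f : ℝ → ℝ → ℝ} (hf : Cont2 f) :
    torusInt f = torusInt fun y x => f x y := by
  have h2 : (0:ℝ) ≤ 2 * π := by positivity
  simp only [torusInt, intervalIntegral.integral_of_le h2]
  exact integral_integral_swap hf.integrable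

lemma torusInt_add {f g : ℝ → ℝ → ℝ} (hf : Cont2 f) (hg : Cont2 g) :
    torusInt (fun x y => f x y + g x y) = torusInt f + torusInt g := by
  rw [torusInt_eq hf, torusInt_eq hg, torusInt_eq (hf.add hg)]
  exact integral_add hf.integrable hg.integrable

lemma torusInt_const_mul (c : ℝ) (f : ℝ → ℝ → ℝ) :
    torusInt (fun x y => c * f x y) = c * torusInt f := by
  simp only [torusInt, intervalIntegral.integral_const_mul]

lemma torusInt_mono {f g : ℝ → ℝ → ℝ} (hf : Cont2 f) (hg : Cont2 g)
    (h : ∀ x y, f x y ≤ g x y) : torusInt f ≤ torusInt g := by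
  rw [torusInt_eq hf, torusInt_eq hg]
  exact integral_mono hf.integrable hg.integrable fun p => h p.1 p.2

lemma torusInt_nonneg {f : ℝ → ℝ → ℝ} (h : ∀ x y, 0 ≤ f x y) : 0 ≤ torusInt f := by
  have h2 : (0:ℝ) ≤ 2 * π := by positivity
  exact intervalIntegral.integral_nonneg h2 fun x _ =>
    intervalIntegral.integral_nonneg h2 fun y _ => h x y

/-- Integration by parts in the inner variable; the boundary terms cancel by periodicity. -/
lemma torusInt_ibp_y {f fy g gy : ℝ → ℝ → ℝ} (hfy : Cont2 fy) (hgy : Cont2 gy)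
    (hf' : ∀ x y, HasDerivAt (fun b => f x b) (fy x y) y)
    (hg' : ∀ x y, HasDerivAt (fun b => g x b) (gy x y) y)
    (hfp : ∀ x y, f x (y + 2 * π) = f x y) (hgp : ∀ x y, g x (y + 2 * π) = g x y) :
    torusInt (fun x y => f x y * gy x y) = -torusInt (fun x y => fy x y * g x y) := by
  rw [torusInt, torusInt, ← intervalIntegral.integral_neg]
  congr 1; ext x
  have c1 : Continuous fun y => fy x y := Continuous.comp (g := fun p : ℝ × ℝ => fy p.1 p.2) hfy
    (f := fun y => (x, y)) (by fun_prop)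
  have c2 : Continuous fun y => gy x y := Continuous.comp (g := fun p : ℝ × ℝ => gy p.1 p.2) hgy
    (f := fun y => (x, y)) (by fun_prop)
  rw [intervalIntegral.integral_mul_deriv_eq_deriv_mul (fun y _ => hf' x y) (fun y _ => hg' x y)
    (c1.intervalIntegrable _ _) (c2.intervalIntegrable _ _)]
  have e1 := hfp x 0
  have e2 := hgp x 0
  rw [zero_add] at e1 e2
  rw [e1, e2]; ring

lemma torusInt_ibp_x {f fx g gx : ℝ → ℝ → ℝ} (hf : Cont2 f) (hg : Cont2 g)
    (hfx : Cont2 fx) (hgx : Cont2 gx)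
    (hf' : ∀ x y, HasDerivAt (fun a => f a y) (fx x y) x)
    (hg' : ∀ x y, HasDerivAt (fun a => g a y) (gx x y) x)
    (hfp : ∀ x y, f (x + 2 * π) y = f x y) (hgp : ∀ x y, g (x + 2 * π) y = g x y) :
    torusInt (fun x y => f x y * gx x y) = -torusInt (fun x y => fx x y * g x y) := by
  rw [torusInt_swap (hf.mul hgx), torusInt_swap (hfx.mul hg)]
  exact torusInt_ibp_y hfx.swap hgx.swap (fun y x => hf' x y) (fun y x => hg' x y)
    (fun y x => hfp x y) (fun y x => hgp x y)

/-- Taylor's formula `f(x+1) = f(x) + f'(x) + ∫₀¹ (1-s) f''(x+s) ds` expresses `f'` through `f`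
and `f''`, so `f'` inherits their continuity in a parameter. -/
lemma continuous_deriv_of_second {X : Type*} [TopologicalSpace X] {f f1 f2 : X → ℝ → ℝ}
    (hf : Continuous fun p : X × ℝ => f p.1 p.2) (hf2 : Continuous fun p : X × ℝ => f2 p.1 p.2)
    (h1 : ∀ q x, HasDerivAt (f q) (f1 q x) x) (h2 : ∀ q x, HasDerivAt (f1 q) (f2 q x) x) :
    Continuous fun p : X × ℝ => f1 p.1 p.2 := by
  have key : ∀ q x, f1 q x =
      f q (x + 1) - f q x - ∫ s in (0:ℝ)..1, (1 - s) * f2 q (x + s) := by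
    intro q x
    have c1 : Continuous (f1 q) :=
      continuous_iff_continuousAt.2 fun x => (h2 q x).continuousAt
    have c2 : Continuous (f2 q) := Continuous.comp (g := fun p : X × ℝ => f2 p.1 p.2) hf2
      (f := fun y => (q, y)) (by fun_prop)
    have d1 : ∀ s, HasDerivAt (fun s => f q (x + s)) (f1 q (x + s)) s := fun s =>
      (h1 q (x + s)).comp_const_add x s
    have d2 : ∀ s, HasDerivAt (fun s => f1 q (x + s)) (f2 q (x + s)) s := fun s =>
      (h2 q (x + s)).comp_const_add x s
    have d3 : ∀ s : ℝ, HasDerivAt (fun s => 1 - s) (-1 : ℝ) s := fun s =>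
      (hasDerivAt_id s).const_sub 1
    rw [intervalIntegral.integral_mul_deriv_eq_deriv_mul (fun s _ => d3 s) (fun s _ => d2 s)
      (Continuous.intervalIntegrable (by fun_prop) _ _)
      (Continuous.intervalIntegrable (by fun_prop) _ _), intervalIntegral.integral_const_mul,
      intervalIntegral.integral_eq_sub_of_hasDerivAt (fun s _ => d1 s)
      (Continuous.intervalIntegrable (by fun_prop) _ _)]
    simp; ring
  simp_rw [key]
  have a1 : Continuous fun p : X × ℝ => f p.1 (p.2 + 1) :=
    Continuous.comp (g := fun p : X × ℝ => f p.1 p.2) hf (f := fun p : X × ℝ => (p.1, p.2 + 1))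
      (by fun_prop)
  have a2 : Continuous fun p : X × ℝ => ∫ s in (0:ℝ)..1, (1 - s) * f2 p.1 (p.2 + s) := by
    apply intervalIntegral.continuous_parametric_intervalIntegral_of_continuous'
    have : Continuous fun r : (X × ℝ) × ℝ => f2 r.1.1 (r.1.2 + r.2) :=
      Continuous.comp (g := fun p : X × ℝ => f2 p.1 p.2) hf2
        (f := fun r : (X × ℝ) × ℝ => (r.1.1, r.1.2 + r.2)) (by fun_prop)
    exact Continuous.mul (by fun_prop) this
  exact (a1.sub hf).sub a2

/-- Differentiation under the integral sign over the torus. -/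
lemma hasDerivAt_torusInt {f f' : ℝ → ℝ → ℝ → ℝ}
    (hf : ContinuousOn (fun p : ℝ × ℝ × ℝ => f p.1 p.2.1 p.2.2) {p | 0 < p.1})
    (hf' : ContinuousOn (fun p : ℝ × ℝ × ℝ => f' p.1 p.2.1 p.2.2) {p | 0 < p.1})
    (hd : ∀ t, 0 < t → ∀ x y, HasDerivAt (fun s => f s x y) (f' t x y) t) {t : ℝ} (ht : 0 < t) :
    HasDerivAt (fun s => torusInt (f s)) (torusInt (f' t)) t := by
  have slice : ∀ {g : ℝ → ℝ → ℝ → ℝ},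
      ContinuousOn (fun p : ℝ × ℝ × ℝ => g p.1 p.2.1 p.2.2) {p | 0 < p.1} →
      ∀ s, 0 < s → Cont2 (g s) := fun hg s hs =>
    hg.comp_continuous (f := fun p : ℝ × ℝ => (s, p)) (by fun_prop) fun p => hs
  obtain ⟨B, hB⟩ := ((isCompact_Icc (a := t / 2) (b := 2 * t)).prod
    ((isCompact_Icc (a := (0:ℝ)) (b := 2 * π)).prod
      (isCompact_Icc (a := (0:ℝ)) (b := 2 * π)))).exists_bound_of_continuousOn
    (hf'.mono fun p hp => by
      have := hp.1.1; change 0 < p.1; linarith)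
  have hnear : Icc (t / 2) (2 * t) ∈ nhds t := Icc_mem_nhds (by linarith) (by linarith)
  have hmem : ∀ᵐ p ∂cellMeasure, p ∈ Ioc 0 (2 * π) ×ˢ Ioc 0 (2 * π) := by
    rw [cellMeasure_eq]
    exact ae_restrict_mem (measurableSet_Ioc.prod measurableSet_Ioc)
  have main := hasDerivAt_integral_of_dominated_loc_of_deriv_le (μ := cellMeasure)
    (F := fun s (p : ℝ × ℝ) => f s p.1 p.2) (F' := fun s (p : ℝ × ℝ) => f' s p.1 p.2)
    (bound := fun _ => B) hnear
    (by
      filter_upwards [lt_mem_nhds ht] with s hs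
      exact (slice hf s hs).integrable.aestronglyMeasurable)
    (slice hf t ht).integrable (slice hf' t ht).integrable.aestronglyMeasurable
    (by
      filter_upwards [hmem] with p hp s hs
      exact hB (s, p) ⟨hs, Ioc_subset_Icc_self hp.1, Ioc_subset_Icc_self hp.2⟩)
    (integrable_const B)
    (Filter.Eventually.of_forall fun p s hs => hd s (by linarith [hs.1]) p.1 p.2)
  rw [torusInt_eq (slice hf' t ht)]
  refine main.2.congr_of_eventuallyEq ?_
  filter_upwards [lt_mem_nhds ht] with s hs
  exact torusInt_eq (slice hf s hs)

lemma continuousOn_torusInt {f : ℝ → ℝ → ℝ → ℝ}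
    (hf : ContinuousOn (fun p : ℝ × ℝ × ℝ => f p.1 p.2.1 p.2.2) {p | 0 ≤ p.1}) :
    ContinuousOn (fun s => torusInt (f s)) (Ici 0) := by
  -- Freezing `f` for negative times makes it continuous on the whole space.
  have h1 : Continuous fun p : (ℝ × ℝ) × ℝ => f (max p.1.1 0) p.1.2 p.2 :=
    hf.comp_continuous (f := fun p : (ℝ × ℝ) × ℝ => (max p.1.1 0, p.1.2, p.2)) (by fun_prop)
      fun p => le_max_right p.1.1 0
  have h2 : Continuous fun q : ℝ × ℝ => ∫ y in (0:ℝ)..(2 * π), f (max q.1 0) q.2 y :=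
    intervalIntegral.continuous_parametric_intervalIntegral_of_continuous' h1 _ _
  have h3 : Continuous fun s : ℝ => torusInt (f (max s 0)) :=
    intervalIntegral.continuous_parametric_intervalIntegral_of_continuous'
      (f := fun s x => ∫ y in (0:ℝ)..(2 * π), f (max s 0) x y) h2 _ _
  refine h3.continuousOn.congr fun s hs => ?_
  simp only [max_eq_left (show (0:ℝ) ≤ s from hs)]

lemma Cont2.of_left {f : ℝ → ℝ} (hf : Continuous f) : Cont2 fun x _ => f x :=
  hf.comp continuous_fst

lemma Cont2.of_right {f : ℝ → ℝ} (hf : Continuous f) : Cont2 fun _ y => f y :=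
  hf.comp continuous_snd

lemma Cont2.slice {f : ℝ → ℝ → ℝ} (hf : Cont2 f) (x : ℝ) : Continuous (f x) :=
  Continuous.comp (g := fun p : ℝ × ℝ => f p.1 p.2) hf (f := fun y => (x, y)) (by fun_prop)

lemma torusInt_mono_inner {f g : ℝ → ℝ → ℝ} (hf : Cont2 f) (hg : Cont2 g)
    (h : ∀ x, ∫ y in (0:ℝ)..(2 * π), f x y ≤ ∫ y in (0:ℝ)..(2 * π), g x y) :
    torusInt f ≤ torusInt g := by
  have h2 : (0:ℝ) ≤ 2 * π := by positivity
  refine intervalIntegral.integral_mono h2 ?_ ?_ h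
  · exact (intervalIntegral.continuous_parametric_intervalIntegral_of_continuous'
      (f := f) hf _ _).intervalIntegrable _ _
  · exact (intervalIntegral.continuous_parametric_intervalIntegral_of_continuous'
      (f := g) hg _ _).intervalIntegrable _ _

lemma integral_sin_sub_sq (θ : ℝ) : ∫ x in (0:ℝ)..(2 * π), sin (x - θ) ^ 2 = π := by
  rw [intervalIntegral.integral_comp_sub_right (fun x => sin x ^ 2)]
  have hp : Function.Periodic (fun x => sin x ^ 2) (2 * π) := fun x => by simp
  have := hp.intervalIntegral_add_eq (0 - θ) 0
  rw [show 0 - θ + 2 * π = 2 * π - θ by ring, zero_add] at this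
  rw [this, integral_sin_sq]
  simp

lemma integral_cos_sub_sq (θ : ℝ) : ∫ x in (0:ℝ)..(2 * π), cos (x - θ) ^ 2 = π := by
  refine Eq.trans ?_ (integral_sin_sub_sq (θ - π / 2))
  congr 1; ext x
  rw [show x - (θ - π / 2) = (x - θ) + π / 2 by ring, sin_add_pi_div_two]

lemma torusInt_prod (a b : ℝ → ℝ) :
    torusInt (fun x y => a x * b y) =
      (∫ x in (0:ℝ)..(2 * π), a x) * ∫ y in (0:ℝ)..(2 * π), b y := by
  simp only [torusInt, intervalIntegral.integral_const_mul, intervalIntegral.integral_mul_const]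

lemma periodic_deriv {f f' : ℝ → ℝ} (h : ∀ x, HasDerivAt f (f' x) x)
    (hp : ∀ x, f (x + 2 * π) = f x) (x : ℝ) : f' (x + 2 * π) = f' x := by
  have h1 : HasDerivAt (fun y => f (y + 2 * π)) (f' (x + 2 * π)) x :=
    (h (x + 2 * π)).comp_add_const x (2 * π)
  rw [funext hp] at h1
  exact h1.unique (h x)

/-! ### The tent function -/

lemma mod2pi_mem (y : ℝ) : -π ≤ mod2pi y ∧ mod2pi y < π := by
  have hp := pi_pos
  have h1 := Int.floor_le ((y + π) / (2 * π))
  have h2 := Int.lt_floor_add_one ((y + π) / (2 * π))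
  rw [le_div_iff₀ (by positivity)] at h1
  rw [div_lt_iff₀ (by positivity)] at h2
  constructor <;> rw [mod2pi] <;> nlinarith

lemma mod2pi_of_mem {y : ℝ} (h1 : -π ≤ y) (h2 : y < π) : mod2pi y = y := by
  have hp := pi_pos
  have : ⌊(y + π) / (2 * π)⌋ = 0 := by
    rw [Int.floor_eq_iff]
    constructor
    · push_cast; apply div_nonneg <;> linarith
    · push_cast; rw [div_lt_iff₀ (by positivity)]; linarith
  simp [mod2pi, this]

lemma mod2pi_add (y : ℝ) : mod2pi (y + 2 * π) = mod2pi y := by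
  have hp := pi_pos
  rw [mod2pi, mod2pi, show (y + 2 * π + π) / (2 * π) = (y + π) / (2 * π) + 1 by field_simp; ring,
    Int.floor_add_one]
  push_cast; ring

lemma tentPer_add (κ β y : ℝ) : tentPer κ β (y + 2 * π) = tentPer κ β y := by
  simp only [tentPer, mod2pi_add]

lemma tentPer_nonneg {κ : ℝ} (hκ : 0 < κ) (β y : ℝ) : 0 ≤ tentPer κ β y := by
  unfold tentPer
  split_ifs with h
  · exact div_nonneg (by linarith) (rpow_nonneg hκ.le _)
  · exact le_rfl

lemma tentPer_inner {κ β y : ℝ} (hh : κ ^ β < 1) (hy : |y| ≤ κ ^ β) :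
    tentPer κ β y = (κ ^ β - |y|) / κ ^ β := by
  have hp := pi_gt_three
  have := abs_le.1 hy
  rw [tentPer, mod2pi_of_mem (by linarith) (by linarith), if_pos hy]

lemma tentPer_outer {κ β y : ℝ} (hy : κ ^ β ≤ |y|) (hy' : |y| < π) :
    tentPer κ β y = 0 := by
  have := abs_lt.1 hy'
  rw [tentPer, mod2pi_of_mem (by linarith) (by linarith)]
  split_ifs with h
  · rw [le_antisymm h hy]; simp
  · rfl

lemma periodic_mod2pi {u : ℝ → ℝ} (hu : ∀ y, u (y + 2 * π) = u y) (y : ℝ) :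
    u (mod2pi y) = u y := by
  have hp : Function.Periodic u (2 * π) := hu
  rw [mod2pi, mul_comm]
  exact hp.sub_int_mul_eq _

/-- On the support of the tent the shear deviates from `u 0` by at most `c_H h^α`, where
`h = κ^β` is the half-width of the tent. -/
lemma shear_mul_tent_le {κ β α c_H : ℝ} {u : ℝ → ℝ} (hκ : 0 < κ) (hα : 0 < α) (hc : 0 < c_H)
    (hu : ∀ y, u (y + 2 * π) = u y)
    (hH : ∀ y y' : ℝ, |u y - u y'| ≤ c_H * |y - y'| ^ α) (y : ℝ) :
    |u y - u 0| * tentPer κ β y ≤ c_H * (κ ^ β) ^ α * tentPer κ β y := by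
  by_cases h : |mod2pi y| ≤ κ ^ β
  · refine mul_le_mul_of_nonneg_right ?_ (tentPer_nonneg hκ β y)
    rw [← periodic_mod2pi hu y]
    refine (hH _ _).trans ?_
    rw [sub_zero]
    gcongr
  · simp [tentPer, h]

lemma integral_tent_mul {κ β : ℝ} (hκ : 0 < κ) (hh : κ ^ β < 1) {g : ℝ → ℝ} (hg : Continuous g)
    (hφ : Continuous (tentPer κ β)) (hgp : ∀ y, g (y + 2 * π) = g y) :
    ∫ y in (0:ℝ)..(2 * π), g y * tentPer κ β y =
      (∫ y in (-κ ^ β)..0, (κ ^ β + y) / κ ^ β * g y) +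
      ∫ y in (0:ℝ)..(κ ^ β), (κ ^ β - y) / κ ^ β * g y := by
  have hπ := pi_gt_three
  have hpos : 0 < κ ^ β := rpow_pos_of_pos hκ β
  set h := κ ^ β with hdef
  have hp : Function.Periodic (fun y => g y * tentPer κ β y) (2 * π) := fun y => by
    simp only [hgp, tentPer_add]
  have e := hp.intervalIntegral_add_eq 0 (-π)
  rw [zero_add, show -π + 2 * π = π by ring] at e
  have hi : ∀ a b, IntervalIntegrable (fun y => g y * tentPer κ β y) volume a b :=
    fun a b => (hg.mul hφ).intervalIntegrable a b
  rw [e, ← intervalIntegral.integral_add_adjacent_intervals (hi (-π) (-h)) (hi (-h) π),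
    ← intervalIntegral.integral_add_adjacent_intervals (hi (-h) 0) (hi 0 π),
    ← intervalIntegral.integral_add_adjacent_intervals (hi 0 h) (hi h π)]
  have z1 : ∫ y in (-π)..(-h), g y * tentPer κ β y = 0 := by
    rw [intervalIntegral.integral_of_le (by linarith), integral_Ioc_eq_integral_Ioo]
    refine setIntegral_eq_zero_of_forall_eq_zero fun y hy => ?_
    rw [tentPer_outer, mul_zero]
    · rw [abs_of_neg (by linarith [hy.2])]; linarith [hy.2]
    · rw [abs_of_neg (by linarith [hy.2])]; linarith [hy.1]
  have z2 : ∫ y in h..π, g y * tentPer κ β y = 0 := by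
    rw [intervalIntegral.integral_of_le (by linarith), integral_Ioc_eq_integral_Ioo]
    refine setIntegral_eq_zero_of_forall_eq_zero fun y hy => ?_
    rw [tentPer_outer, mul_zero]
    · rw [abs_of_pos (by linarith [hy.1])]; exact hy.1.le
    · rw [abs_of_pos (by linarith [hy.1])]; exact hy.2
  have z3 : ∫ y in (-h)..0, g y * tentPer κ β y = ∫ y in (-h)..0, (h + y) / h * g y := by
    refine intervalIntegral.integral_congr fun y hy => ?_
    rw [uIcc_of_le (by linarith)] at hy
    have ha : |y| = -y := abs_of_nonpos hy.2
    rw [tentPer_inner hh (by rw [ha]; linarith [hy.1]), ha, ← hdef]; ring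
  have z4 : ∫ y in (0:ℝ)..h, g y * tentPer κ β y = ∫ y in (0:ℝ)..h, (h - y) / h * g y := by
    refine intervalIntegral.integral_congr fun y hy => ?_
    rw [uIcc_of_le (by linarith)] at hy
    have ha : |y| = y := abs_of_nonneg hy.1
    rw [tentPer_inner hh (by rw [ha]; exact hy.2), ha, ← hdef]; ring
  rw [z1, z2, z3, z4]; ring

/-- The mass of `φ²` is at least that of its right half, `∫₀ʰ (1 - y/h)² dy = h/3`. -/
lemma tent_sq_ge {κ β : ℝ} (hκ : 0 < κ) (hh : κ ^ β < 1) (hφ : Continuous (tentPer κ β)) :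
    κ ^ β / 3 ≤ ∫ y in (0:ℝ)..(2 * π), tentPer κ β y ^ 2 := by
  have hπ := pi_gt_three
  have hpos : 0 < κ ^ β := rpow_pos_of_pos hκ β
  set h := κ ^ β with hdef
  have e : ∫ y in (0:ℝ)..h, tentPer κ β y ^ 2 = h / 3 := by
    have : ∫ y in (0:ℝ)..h, tentPer κ β y ^ 2 = ∫ y in (0:ℝ)..h, (h ^ 2)⁻¹ * (h - y) ^ 2 := by
      refine intervalIntegral.integral_congr fun y hy => ?_
      rw [uIcc_of_le (by linarith)] at hy
      have ha : |y| = y := abs_of_nonneg hy.1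
      rw [tentPer_inner hh (by rw [ha]; exact hy.2), ha, ← hdef]
      field_simp
    rw [this, intervalIntegral.integral_const_mul,
      intervalIntegral.integral_comp_sub_left (fun y => y ^ 2), integral_pow]
    simp; field_simp; norm_num
  rw [← e]
  refine intervalIntegral.integral_mono_interval le_rfl hpos.le (by linarith) ?_ ?_
  · exact Eventually.of_forall fun y => sq_nonneg _
  · exact (hφ.pow 2).intervalIntegrable _ _

/-- Testing a second derivative against the tent, `∫ f'' φ = h⁻¹ (∫₀ʰ f' - ∫₋ₕ⁰ f')`, so that
Young's inequality absorbs the result into `½ ∫ f'²`. -/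
lemma tent_second_deriv_ge {κ β : ℝ} (hκ : 0 < κ) (hh : κ ^ β < 1)
    (hφ : Continuous (tentPer κ β)) {f1 f2 : ℝ → ℝ} (hc : Continuous f2)
    (hd : ∀ y, HasDerivAt f1 (f2 y) y) (hp : ∀ y, f1 (y + 2 * π) = f1 y) (σ : ℝ) :
    -(1 / 2 * ∫ y in (0:ℝ)..(2 * π), f1 y ^ 2) - σ ^ 2 / κ ^ β ≤
      σ * ∫ y in (0:ℝ)..(2 * π), f2 y * tentPer κ β y := by
  have hπ := pi_gt_three
  have hpos : 0 < κ ^ β := rpow_pos_of_pos hκ β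
  rw [integral_tent_mul hκ hh hc hφ (periodic_deriv hd hp)]
  set h := κ ^ β with hdef
  have c1 : Continuous f1 := continuous_iff_continuousAt.2 fun x => (hd x).continuousAt
  have dm : ∀ y : ℝ, HasDerivAt (fun y => (h - y) / h) (-1 / h) y := fun y =>
    ((hasDerivAt_id y).const_sub h).div_const h
  have dp : ∀ y : ℝ, HasDerivAt (fun y => (h + y) / h) (1 / h) y := fun y =>
    ((hasDerivAt_id y).const_add h).div_const h
  rw [intervalIntegral.integral_mul_deriv_eq_deriv_mul (fun y _ => dm y) (fun y _ => hd y)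
      (continuous_const.intervalIntegrable _ _) (hc.intervalIntegrable _ _),
    intervalIntegral.integral_mul_deriv_eq_deriv_mul (fun y _ => dp y) (fun y _ => hd y)
      (continuous_const.intervalIntegrable _ _) (hc.intervalIntegrable _ _),
    intervalIntegral.integral_const_mul, intervalIntegral.integral_const_mul]
  have hps : Function.Periodic (fun y => f1 y ^ 2) (2 * π) := fun y => by simp only [hp]
  have e := hps.intervalIntegral_add_eq 0 (-π)
  rw [zero_add, show -π + 2 * π = π by ring] at e
  rw [e]
  have hi : ∀ a b, IntervalIntegrable (fun y => f1 y ^ 2) volume a b :=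
    fun a b => (c1.pow 2).intervalIntegrable a b
  have big : (∫ y in (-h)..0, f1 y ^ 2) + (∫ y in (0:ℝ)..h, f1 y ^ 2) ≤
      ∫ y in (-π)..π, f1 y ^ 2 := by
    rw [intervalIntegral.integral_add_adjacent_intervals (hi _ _) (hi _ _)]
    exact intervalIntegral.integral_mono_interval (by linarith) (by linarith) (by linarith)
      (Eventually.of_forall fun y => sq_nonneg _) (hi _ _)
  -- Young's inequality, integrated over an interval of length `h`
  have young : ∀ (a τ : ℝ), -(1 / 2 * ∫ y in a..(a + h), f1 y ^ 2) - τ ^ 2 / h / 2 ≤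
      τ / h * ∫ y in a..(a + h), f1 y := by
    intro a τ
    have : ∫ y in a..(a + h), (-(1 / 2) * f1 y ^ 2 - τ ^ 2 / h ^ 2 / 2) ≤
        ∫ y in a..(a + h), τ / h * f1 y := by
      refine intervalIntegral.integral_mono (by linarith)
        (Continuous.intervalIntegrable (by fun_prop) _ _)
        (Continuous.intervalIntegrable (by fun_prop) _ _) fun y => ?_
      have := sq_nonneg (f1 y + τ / h)
      have e2 : τ ^ 2 / h ^ 2 = (τ / h) ^ 2 := by rw [div_pow]
      simp only
      rw [e2]; nlinarith
    rw [intervalIntegral.integral_sub ((hi _ _).const_mul _)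
      (continuous_const.intervalIntegrable _ _), intervalIntegral.integral_const_mul,
      intervalIntegral.integral_const_mul, intervalIntegral.integral_const, smul_eq_mul] at this
    have e3 : (a + h - a) * (τ ^ 2 / h ^ 2 / 2) = τ ^ 2 / h / 2 := by field_simp; ring
    rw [e3] at this
    linarith
  have y1 := young 0 σ
  have y2 := young (-h) (-σ)
  rw [zero_add] at y1
  rw [neg_add_cancel, neg_sq] at y2
  have e4 : σ * ((h + 0) / h * f1 0 - (h + -h) / h * f1 (-h) -
      1 / h * ∫ y in (-h)..0, f1 y) = σ * f1 0 + (-σ) / h * ∫ y in (-h)..0, f1 y := by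
    field_simp; ring
  have e5 : σ * ((h - h) / h * f1 h - (h - 0) / h * f1 0 -
      -1 / h * ∫ y in (0:ℝ)..h, f1 y) = -σ * f1 0 + σ / h * ∫ y in (0:ℝ)..h, f1 y := by
    field_simp; ring
  rw [mul_add, e4, e5]
  linarith

/-! ### The equation at a fixed positive time -/

/-- A spatial profile `f = ρ(t)` with its classical derivatives and `ft = ∂ₜρ(t)`, linked by the
equation. Unlike in `IsShearSolution`, the first derivatives are jointly continuous. -/
structure Slice (δ κ : ℝ) (u : ℝ → ℝ) (f fx fxx fy fyy ft : ℝ → ℝ → ℝ) : Prop where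
  cf : Cont2 f
  cfx : Cont2 fx
  cfxx : Cont2 fxx
  cfy : Cont2 fy
  cfyy : Cont2 fyy
  cft : Cont2 ft
  dx : ∀ x y, HasDerivAt (fun a => f a y) (fx x y) x
  dxx : ∀ x y, HasDerivAt (fun a => fx a y) (fxx x y) x
  dy : ∀ x y, HasDerivAt (fun b => f x b) (fy x y) y
  dyy : ∀ x y, HasDerivAt (fun b => fy x b) (fyy x y) y
  px : ∀ x y, f (x + 2 * π) y = f x y
  py : ∀ x y, f x (y + 2 * π) = f x y
  pde : ∀ x y, ft x y + u y * fx x y = κ * (δ * fxx x y + fyy x y)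

lemma IsShearSolution.slice {δ κ : ℝ} {u : ℝ → ℝ} {ρ : ℝ → ℝ → ℝ → ℝ}
    (hρ : IsShearSolution δ κ u ρ) {t : ℝ} (ht : 0 < t) :
    Slice δ κ u (ρ t) (fun x y => deriv (fun a => ρ t a y) x)
      (fun x y => deriv (fun a => deriv (fun b => ρ t b y) a) x)
      (fun x y => deriv (fun b => ρ t x b) y)
      (fun x y => deriv (fun b => deriv (fun c => ρ t x c) b) y)
      (fun x y => deriv (fun s => ρ s x y) t) := by
  have cut : ∀ {g : ℝ → ℝ → ℝ → ℝ},
      ContinuousOn (fun p : ℝ × ℝ × ℝ => g p.1 p.2.1 p.2.2) {p | 0 < p.1} → Cont2 (g t) :=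
    fun hg => hg.comp_continuous (f := fun p : ℝ × ℝ => (t, p)) (by fun_prop) fun p => ht
  have cf : Cont2 (ρ t) := cut (hρ.cont.mono fun p hp => show 0 ≤ p.1 from le_of_lt hp)
  have cxx := cut (g := fun t x y => deriv (fun a => deriv (fun b => ρ t b y) a) x) hρ.cont_dxx
  have cyy := cut (g := fun t x y => deriv (fun b => deriv (fun c => ρ t x c) b) y) hρ.cont_dyy
  have dx : ∀ x y, HasDerivAt (fun a => ρ t a y) (deriv (fun a => ρ t a y) x) x :=
    fun x y => (hρ.diff_x t ht x y).hasDerivAt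
  have dy : ∀ x y, HasDerivAt (fun b => ρ t x b) (deriv (fun b => ρ t x b) y) y :=
    fun x y => (hρ.diff_y t ht x y).hasDerivAt
  have dxx := fun x y => (hρ.diff_xx t ht x y).hasDerivAt
  have dyy := fun x y => (hρ.diff_yy t ht x y).hasDerivAt
  refine ⟨cf, ?_, cxx, ?_, cyy,
    cut (g := fun t x y => deriv (fun s => ρ s x y) t) hρ.cont_dt, dx, dxx, dy, dyy,
    hρ.periodic_x t, hρ.periodic_y t, hρ.pde t ht⟩
  · have : Cont2 fun y x => deriv (fun a => ρ t a y) x :=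
      continuous_deriv_of_second (f := fun y x => ρ t x y)
        (f2 := fun y x => deriv (fun a => deriv (fun b => ρ t b y) a) x) cf.swap cxx.swap
        (fun y x => dx x y) (fun y x => dxx x y)
    exact this.swap
  · exact continuous_deriv_of_second (f := ρ t)
      (f2 := fun x y => deriv (fun b => deriv (fun c => ρ t x c) b) y) cf cyy dy dyy

section
variable {δ κ : ℝ} {u : ℝ → ℝ} {f fx fxx fy fyy ft : ℝ → ℝ → ℝ}

/-- Energy identity: the transport term drops out because `u` does not depend on `x`. -/
lemma Slice.energy (S : Slice δ κ u f fx fxx fy fyy ft) (hu : Continuous u) :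
    torusInt (fun x y => f x y * ft x y) =
      -κ * torusInt (fun x y => δ * fx x y ^ 2 + fy x y ^ 2) := by
  have cu : Cont2 fun _ y => u y := Cont2.of_right hu
  have hpx : ∀ x y, fx (x + 2 * π) y = fx x y := fun x y =>
    periodic_deriv (f := fun a => f a y) (fun x => S.dx x y) (fun x => S.px x y) x
  have hpy : ∀ x y, fy x (y + 2 * π) = fy x y := fun x y =>
    periodic_deriv (f := fun b => f x b) (fun y => S.dy x y) (fun y => S.py x y) y
  have i1 := torusInt_ibp_y S.cfy S.cfyy S.dy S.dyy S.py hpy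
  have i2 := torusInt_ibp_x S.cf S.cfx S.cfx S.cfxx S.dx S.dxx S.px hpx
  have i3 := torusInt_ibp_x (cu.mul S.cf) S.cf (cu.mul S.cfx) S.cfx
    (fun x y => (S.dx x y).const_mul (u y)) S.dx (fun x y => by simp only [S.px]) S.px
  have i3' : torusInt (fun x y => u y * fx x y * f x y) =
      torusInt (fun x y => u y * f x y * fx x y) := by
    congr 1; ext x y; ring
  have e1 : (fun x y => f x y * ft x y) = fun x y =>
      (κ * δ) * (f x y * fxx x y) + (κ * (f x y * fyy x y) + (-1) * (u y * f x y * fx x y)) := by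
    ext x y; linear_combination f x y * S.pde x y
  have e2 : (fun x y => δ * fx x y ^ 2 + fy x y ^ 2) = fun x y =>
      δ * (fx x y * fx x y) + fy x y * fy x y := by
    ext x y; ring
  rw [e1, e2, torusInt_add ((S.cf.mul S.cfxx).const_mul _)
      (((S.cf.mul S.cfyy).const_mul _).add (((cu.mul S.cf).mul S.cfx).const_mul _)),
    torusInt_add ((S.cf.mul S.cfyy).const_mul _) (((cu.mul S.cf).mul S.cfx).const_mul _),
    torusInt_add ((S.cfx.mul S.cfx).const_mul _) (S.cfy.mul S.cfy)]
  simp only [torusInt_const_mul]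
  rw [i1, i2]
  linarith

/-- Lower bound for the time derivative of the pairing of the solution with the travelling wave
`φ(y) sin(x - θ)`, where `θ = u(0) t` and `φ` is the tent. -/
lemma Slice.pairing_ge (S : Slice δ κ u f fx fxx fy fyy ft) (hu : Continuous u) (hδ : 0 ≤ δ)
    (hκ : 0 < κ) {β L c : ℝ} (hL : 0 ≤ L) (hh : κ ^ β < 1) (hφ : Continuous (tentPer κ β))
    (hshear : ∀ y, |u y - c| * tentPer κ β y ≤ L * tentPer κ β y) (θ : ℝ) :
    -(κ / 2) * torusInt (fun x y => δ * fx x y ^ 2 + fy x y ^ 2) -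
      (κ * δ / 2 * (π * ∫ y in (0:ℝ)..(2 * π), tentPer κ β y ^ 2) +
        L / 2 * (π * ∫ y in (0:ℝ)..(2 * π), tentPer κ β y ^ 2) +
        L / 2 * torusInt (fun x y => f x y ^ 2) + κ * π / κ ^ β) ≤
      torusInt (fun x y => ft x y * (tentPer κ β y * sin (x - θ)) +
        f x y * (tentPer κ β y * (-c * cos (x - θ)))) := by
  have hpos : 0 < κ ^ β := rpow_pos_of_pos hκ β
  set φ := tentPer κ β with hφdef
  have hφ0 : ∀ y, 0 ≤ φ y := tentPer_nonneg hκ β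
  have cu : Cont2 fun _ y => u y := Cont2.of_right hu
  have cφ : Cont2 fun _ y => φ y := Cont2.of_right hφ
  have cs : Cont2 fun x _ => sin (x - θ) := Cont2.of_left (by fun_prop)
  have ck : Cont2 fun x _ => cos (x - θ) := Cont2.of_left (by fun_prop)
  have hpx : ∀ x y, fx (x + 2 * π) y = fx x y := fun x y =>
    periodic_deriv (f := fun a => f a y) (fun x => S.dx x y) (fun x => S.px x y) x
  have hpy : ∀ x y, fy x (y + 2 * π) = fy x y := fun x y =>
    periodic_deriv (f := fun b => f x b) (fun y => S.dy x y) (fun y => S.py x y) y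
  have ds : ∀ x : ℝ, HasDerivAt (fun a => sin (a - θ)) (cos (x - θ)) x := fun x => by
    simpa using ((hasDerivAt_id x).sub_const θ).sin
  have ps : ∀ x : ℝ, sin (x + 2 * π - θ) = sin (x - θ) := fun x => by
    rw [show x + 2 * π - θ = x - θ + 2 * π by ring, sin_add_two_pi]
  have i1 := torusInt_ibp_x (cφ.mul cs) S.cfx (cφ.mul ck) S.cfxx
    (fun x y => (ds x).const_mul (φ y)) S.dxx (fun x y => by simp only [ps]) hpx
  have i2 := torusInt_ibp_x ((cu.mul cφ).mul cs) S.cf ((cu.mul cφ).mul ck) S.cfx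
    (fun x y => (ds x).const_mul (u y * φ y)) S.dx (fun x y => by simp only [ps]) S.px
  -- the three contributions left after integrating by parts in `x`
  have e : torusInt (fun x y => ft x y * (φ y * sin (x - θ)) +
        f x y * (φ y * (-c * cos (x - θ)))) =
      κ * torusInt (fun x y => sin (x - θ) * (fyy x y * φ y)) +
      torusInt (fun x y => (-κ * δ) * (φ y * cos (x - θ) * fx x y) +
        (u y - c) * φ y * cos (x - θ) * f x y) := by
    have e1 : (fun x y => ft x y * (φ y * sin (x - θ)) + f x y * (φ y * (-c * cos (x - θ)))) =
        fun x y => κ * (sin (x - θ) * (fyy x y * φ y)) +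
          ((κ * δ) * (φ y * sin (x - θ) * fxx x y) +
          ((-1) * (u y * φ y * sin (x - θ) * fx x y) +
          (-c) * (φ y * cos (x - θ) * f x y))) := by
      ext x y; linear_combination φ y * sin (x - θ) * S.pde x y
    have e2 : (fun x y => (-κ * δ) * (φ y * cos (x - θ) * fx x y) +
        (u y - c) * φ y * cos (x - θ) * f x y) =
        fun x y => (-κ * δ) * (φ y * cos (x - θ) * fx x y) +
        (u y * φ y * cos (x - θ) * f x y + (-c) * (φ y * cos (x - θ) * f x y)) := by
      ext x y; ring
    have c1 : Cont2 fun x y => κ * (sin (x - θ) * (fyy x y * φ y)) :=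
      (cs.mul (S.cfyy.mul cφ)).const_mul _
    have c2 : Cont2 fun x y => (κ * δ) * (φ y * sin (x - θ) * fxx x y) :=
      ((cφ.mul cs).mul S.cfxx).const_mul _
    have c3 : Cont2 fun x y => (-1) * (u y * φ y * sin (x - θ) * fx x y) :=
      (((cu.mul cφ).mul cs).mul S.cfx).const_mul _
    have c4 : Cont2 fun x y => (-c) * (φ y * cos (x - θ) * f x y) :=
      ((cφ.mul ck).mul S.cf).const_mul _
    have c5 : Cont2 fun x y => (-κ * δ) * (φ y * cos (x - θ) * fx x y) :=
      ((cφ.mul ck).mul S.cfx).const_mul _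
    have c6 : Cont2 fun x y => u y * φ y * cos (x - θ) * f x y :=
      ((cu.mul cφ).mul ck).mul S.cf
    rw [e1, e2, torusInt_add c1 (c2.add (c3.add c4)), torusInt_add c2 (c3.add c4),
      torusInt_add c3 c4, torusInt_add c5 (c6.add c4), torusInt_add c6 c4]
    simp only [torusInt_const_mul]
    rw [i1, i2]; ring
  -- diffusion in `y`
  have b1 : -(1 / 2) * torusInt (fun x y => fy x y ^ 2) - π / κ ^ β ≤
      torusInt (fun x y => sin (x - θ) * (fyy x y * φ y)) := by
    have cl : Cont2 fun x y => -(1 / 2) * (fy x y * fy x y) := (S.cfy.mul S.cfy).const_mul _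
    have cr : Cont2 fun x (_ : ℝ) => -(1 / (κ ^ β * (2 * π))) * sin (x - θ) ^ 2 :=
      Cont2.of_left (by fun_prop)
    have m := torusInt_mono_inner (cl.add cr) (cs.mul (S.cfyy.mul cφ)) fun x => by
      have := tent_second_deriv_ge hκ hh hφ (S.cfyy.slice x) (S.dyy x) (hpy x) (sin (x - θ))
      rw [intervalIntegral.integral_add ((cl.slice x).intervalIntegrable _ _)
        ((cr.slice x).intervalIntegrable _ _), intervalIntegral.integral_const_mul,
        intervalIntegral.integral_const_mul, intervalIntegral.integral_const_mul,
        intervalIntegral.integral_const, smul_eq_mul]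
      simp only [← pow_two]
      refine le_trans (le_of_eq ?_) this
      field_simp
      ring
    rw [torusInt_add cl cr, torusInt_const_mul, torusInt_const_mul] at m
    have e3 := torusInt_prod (fun x => sin (x - θ) ^ 2) (fun _ => (1:ℝ))
    rw [integral_sin_sub_sq, intervalIntegral.integral_const, smul_eq_mul] at e3
    simp only [mul_one] at e3
    rw [e3] at m
    simp only [← pow_two] at m
    refine le_trans (le_of_eq ?_) m
    field_simp
    ring
  -- Young's inequality for diffusion in `x` and for the shear
  have b2 : -(κ * δ / 2) * torusInt (fun x y => fx x y ^ 2) -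
      (κ * δ / 2 + L / 2) * (π * ∫ y in (0:ℝ)..(2 * π), φ y ^ 2) -
      L / 2 * torusInt (fun x y => f x y ^ 2) ≤
      torusInt (fun x y => (-κ * δ) * (φ y * cos (x - θ) * fx x y) +
        (u y - c) * φ y * cos (x - θ) * f x y) := by
    have q1 : Cont2 fun x y => -(κ * δ / 2) * fx x y ^ 2 := by
      simpa only [pow_two] using (S.cfx.mul S.cfx).const_mul (-(κ * δ / 2))
    have q2 : Cont2 fun x y => -(κ * δ / 2 + L / 2) * (cos (x - θ) ^ 2 * φ y ^ 2) := by
      simpa only [pow_two] using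
        ((ck.mul ck).mul (cφ.mul cφ)).const_mul (-(κ * δ / 2 + L / 2))
    have q3 : Cont2 fun x y => -(L / 2) * f x y ^ 2 := by
      simpa only [pow_two] using (S.cf.mul S.cf).const_mul (-(L / 2))
    have q4 : Cont2 fun x y => (-κ * δ) * (φ y * cos (x - θ) * fx x y) +
        (u y - c) * φ y * cos (x - θ) * f x y :=
      (((cφ.mul ck).mul S.cfx).const_mul _).add
        ((((Cont2.of_right (hu.sub continuous_const)).mul cφ).mul ck).mul S.cf)
    have m := torusInt_mono (q1.add (q2.add q3)) q4 fun x y => by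
      have hκδ : 0 ≤ κ * δ := mul_nonneg hκ.le hδ
      have y1 : 0 ≤ κ * δ * (fx x y - φ y * cos (x - θ)) ^ 2 := by positivity
      have y2 : |(u y - c) * φ y * cos (x - θ) * f x y| ≤
          L * φ y * |cos (x - θ)| * |f x y| := by
        rw [abs_mul, abs_mul, abs_mul, abs_of_nonneg (hφ0 y)]
        exact mul_le_mul_of_nonneg_right
          (mul_le_mul_of_nonneg_right (hshear y) (abs_nonneg _)) (abs_nonneg _)
      have y3 := (abs_le.1 y2).1
      have y4 : 0 ≤ L * (|f x y| - φ y * |cos (x - θ)|) ^ 2 := by positivity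
      have s1 := sq_abs (f x y)
      have s2 := sq_abs (cos (x - θ))
      have y5 : 0 ≤ L * (f x y ^ 2 - 2 * (φ y * |cos (x - θ)| * |f x y|) +
          φ y ^ 2 * cos (x - θ) ^ 2) := by
        rw [← s1, ← s2]; linarith
      linarith
    rw [torusInt_add q1 (q2.add q3), torusInt_add q2 q3] at m
    simp only [torusInt_const_mul] at m
    have e3 := torusInt_prod (fun x => cos (x - θ) ^ 2) (fun y => φ y ^ 2)
    rw [integral_cos_sub_sq] at e3
    rw [e3] at m
    linarith
  have q1 : Cont2 fun x y => δ * fx x y ^ 2 := by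
    simpa only [pow_two] using (S.cfx.mul S.cfx).const_mul δ
  have q2 : Cont2 fun x y => fy x y ^ 2 := by
    simpa only [pow_two] using S.cfy.mul S.cfy
  rw [e, torusInt_add q1 q2, torusInt_const_mul]
  have b1' := mul_le_mul_of_nonneg_left b1 hκ.le
  have e6 : κ * π / κ ^ β = κ * (π / κ ^ β) := by ring
  rw [e6]
  linarith

end

/-! ### The dissipation bound -/

lemma continuous_of_holder {u : ℝ → ℝ} {c α : ℝ} (hα : 0 < α)
    (hH : ∀ y y' : ℝ, |u y - u y'| ≤ c * |y - y'| ^ α) : Continuous u := by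
  refine continuous_iff_continuousAt.2 fun z => ?_
  refine tendsto_iff_dist_tendsto_zero.2 (squeeze_zero (fun _ => dist_nonneg)
    (fun y => hH y z) ?_)
  have h : Continuous fun y : ℝ => c * |y - z| ^ α :=
    continuous_const.mul ((by fun_prop : Continuous fun y : ℝ => |y - z|).rpow_const
      fun _ => Or.inr hα.le)
  simpa [zero_rpow hα.ne'] using h.tendsto z

lemma IsShearSolution.hasDerivAt_energy {δ κ : ℝ} {u : ℝ → ℝ} {ρ : ℝ → ℝ → ℝ → ℝ}
    (hρ : IsShearSolution δ κ u ρ) (hu : Continuous u) {t : ℝ} (ht : 0 < t) :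
    HasDerivAt (l2normSq ρ) (-(2 * κ) * gradDeltaNormSq δ ρ t) t := by
  have c0 : ContinuousOn (fun p : ℝ × ℝ × ℝ => ρ p.1 p.2.1 p.2.2) {p | 0 < p.1} :=
    hρ.cont.mono fun p hp => show 0 ≤ p.1 from le_of_lt hp
  have h := hasDerivAt_torusInt (f := fun t x y => ρ t x y ^ 2)
    (f' := fun t x y => 2 * (ρ t x y * deriv (fun s => ρ s x y) t)) (c0.pow 2)
    (continuousOn_const.mul (c0.mul hρ.cont_dt))
    (fun t ht x y => by
      refine ((hρ.diff_t t ht x y).hasDerivAt.pow 2).congr_deriv ?_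
      push_cast; ring) ht
  rw [torusInt_const_mul, (hρ.slice ht).energy hu] at h
  refine h.congr_deriv ?_
  change 2 * (-κ * gradDeltaNormSq δ ρ t) = _
  ring

lemma continuousOn_energy {δ κ : ℝ} {u : ℝ → ℝ} {ρ : ℝ → ℝ → ℝ → ℝ}
    (hρ : IsShearSolution δ κ u ρ) : ContinuousOn (l2normSq ρ) (Ici 0) :=
  continuousOn_torusInt (f := fun t x y => ρ t x y ^ 2) (hρ.cont.pow 2)

lemma gradDeltaNormSq_nonneg {δ : ℝ} (hδ : 0 ≤ δ) (ρ : ℝ → ℝ → ℝ → ℝ) (t : ℝ) :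
    0 ≤ gradDeltaNormSq δ ρ t :=
  torusInt_nonneg fun x y => by positivity

lemma IsShearSolution.energy_le {δ κ : ℝ} {u : ℝ → ℝ} {ρ : ℝ → ℝ → ℝ → ℝ}
    (hρ : IsShearSolution δ κ u ρ) (hu : Continuous u) (hκ : 0 < κ) (hδ : 0 ≤ δ)
    {t : ℝ} (ht : 0 ≤ t) : l2normSq ρ t ≤ l2normSq ρ 0 := by
  have := intervalIntegral.sub_le_integral_of_hasDeriv_right_of_le (φ := fun _ => 0) ht
    ((continuousOn_energy hρ).mono fun s hs => hs.1)
    (fun s hs => (hρ.hasDerivAt_energy hu hs.1).hasDerivWithinAt)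
    (integrableOn_const (by simp))
    (fun s hs => by nlinarith [gradDeltaNormSq_nonneg hδ ρ s])
  simp at this
  linarith

/-- Pairing of `ρ(t)` with the tent profile transported by the constant velocity `c`. -/
def wavePairing (c κ β : ℝ) (ρ : ℝ → ℝ → ℝ → ℝ) (t : ℝ) : ℝ :=
  torusInt fun x y => ρ t x y * (tentPer κ β y * sin (x - c * t))

lemma continuousOn_wavePairing {δ κ β c : ℝ} {u : ℝ → ℝ} {ρ : ℝ → ℝ → ℝ → ℝ}
    (hρ : IsShearSolution δ κ u ρ) (hφ : Continuous (tentPer κ β)) :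
    ContinuousOn (wavePairing c κ β ρ) (Ici 0) :=
  continuousOn_torusInt (f := fun t x y => ρ t x y * (tentPer κ β y * sin (x - c * t)))
    (hρ.cont.mul (by fun_prop))

lemma hasDerivAt_wavePairing {δ κ β c : ℝ} {u : ℝ → ℝ} {ρ : ℝ → ℝ → ℝ → ℝ}
    (hρ : IsShearSolution δ κ u ρ) (hφ : Continuous (tentPer κ β)) {t : ℝ} (ht : 0 < t) :
    HasDerivAt (wavePairing c κ β ρ)
      (torusInt fun x y => deriv (fun s => ρ s x y) t * (tentPer κ β y * sin (x - c * t)) +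
        ρ t x y * (tentPer κ β y * (-c * cos (x - c * t)))) t := by
  have c0 : ContinuousOn (fun p : ℝ × ℝ × ℝ => ρ p.1 p.2.1 p.2.2) {p | 0 < p.1} :=
    hρ.cont.mono fun p hp => show 0 ≤ p.1 from le_of_lt hp
  refine hasDerivAt_torusInt (f := fun t x y => ρ t x y * (tentPer κ β y * sin (x - c * t)))
    (f' := fun t x y => deriv (fun s => ρ s x y) t * (tentPer κ β y * sin (x - c * t)) +
        ρ t x y * (tentPer κ β y * (-c * cos (x - c * t))))
    (c0.mul (by fun_prop)) ((hρ.cont_dt.mul (by fun_prop)).add (c0.mul (by fun_prop)))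
    (fun t ht x y => ?_) ht
  have h1 : HasDerivAt (fun s => sin (x - c * s)) (-c * cos (x - c * t)) t := by
    refine (((hasDerivAt_id t).const_mul c).const_sub x).sin.congr_deriv ?_
    simp only [id_eq]; ring
  exact (hρ.diff_t t ht x y).hasDerivAt.mul (h1.const_mul _)

/-- Dissipation upper bound for a `C^α` (Hölder, `0 < α ≤ 1`) shear flow,
with initial datum `φ_{κ,β}(y) sin x`, `β = 1/(α+2)`, on the time-scale `κ^{-α/(α+2)}`. -/
theorem dissipation_bound_holder_shear (α : ℝ) (hα : α ∈ Set.Ioc (0:ℝ) 1)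
    (δ : ℝ) (hδ : δ = 0 ∨ δ = 1) (c_H : ℝ) (hc_H : 0 < c_H) :
    ∃ C : ℝ, 1 ≤ C ∧ ∀ u : ℝ → ℝ, (∀ y, u (y + 2 * π) = u y) →
      (∀ y y' : ℝ, |u y - u y'| ≤ c_H * |y - y'| ^ α) →
      ∀ κ ∈ Set.Ioo (0:ℝ) 1, ∀ ρ : ℝ → ℝ → ℝ → ℝ, IsShearSolution δ κ u ρ →
      (∀ x y : ℝ, ρ 0 x y = tentPer κ (1 / (α + 2)) y * Real.sin x) →
      ∀ t : ℝ, 0 ≤ t → t ≤ κ ^ (-(α / (α + 2))) →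
        κ * ∫ s in (0:ℝ)..t, gradDeltaNormSq δ ρ s ≤
          C * l2normSq ρ 0 * (κ ^ (α / (α + 2)) * t) := by
  obtain ⟨hα0, hα1⟩ := hα
  have hδ0 : 0 ≤ δ := by rcases hδ with h | h <;> simp [h]
  have hδ1 : δ ≤ 1 := by rcases hδ with h | h <;> simp [h]
  refine ⟨2 * c_H + 7, by linarith, ?_⟩
  intro u hup hH κ hκ ρ hρ h_datum t ht _
  obtain ⟨hκ0, hκ1⟩ := hκ
  have hu : Continuous u := continuous_of_holder hα0 hH
  set β := 1 / (α + 2) with hβ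
  have hβ0 : 0 < β := by positivity
  set h := κ ^ β with hh
  have hpos : 0 < h := rpow_pos_of_pos hκ0 β
  have hlt : h < 1 := rpow_lt_one hκ0.le hκ1 hβ0
  set E := κ ^ (α / (α + 2)) with hE
  have hE0 : 0 < E := rpow_pos_of_pos hκ0 _
  have hhα : h ^ α = E := by
    rw [hh, ← rpow_mul hκ0.le, hE, hβ]; congr 1; ring
  -- the exponents satisfy `1 = α/(α+2) + 2β`
  have hκE : κ = E * (h * h) := by
    rw [hE, hh, ← rpow_add hκ0, ← rpow_add hκ0]
    nth_rewrite 1 [← rpow_one κ]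
    congr 1; rw [hβ]; field_simp; ring
  have hκle : κ ≤ E := by
    have : h * h ≤ 1 := by nlinarith
    rw [hκE]; nlinarith
  have hφ : Continuous (tentPer κ β) := by
    have e : tentPer κ β = fun y => ρ 0 (π / 2) y := by
      ext y; rw [h_datum, sin_pi_div_two, mul_one]
    rw [e]
    exact hρ.cont.comp_continuous (f := fun y : ℝ => ((0:ℝ), π / 2, y)) (by fun_prop)
      fun y => le_refl (0:ℝ)
  set N := l2normSq ρ 0 with hN
  have wave_sq : ∀ θ, torusInt (fun x y => sin (x - θ) ^ 2 * tentPer κ β y ^ 2) =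
      π * ∫ y in (0:ℝ)..(2 * π), tentPer κ β y ^ 2 := fun θ => by
    rw [torusInt_prod (fun x => sin (x - θ) ^ 2) (fun y => tentPer κ β y ^ 2),
      integral_sin_sub_sq]
  have hNM : N = π * ∫ y in (0:ℝ)..(2 * π), tentPer κ β y ^ 2 := by
    rw [← wave_sq 0, hN]
    change torusInt _ = _
    congr 1; ext x y; rw [h_datum, sub_zero]; ring
  have hNge : π * (h / 3) ≤ N := by
    rw [hNM]; exact mul_le_mul_of_nonneg_left (tent_sq_ge hκ0 hlt hφ) pi_pos.le
  have hN0 : 0 ≤ N := le_trans (by positivity) hNge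
  -- For a dissipation rate that is not integrable, the Bochner integral is `0` by convention.
  by_cases h_integrable : IntervalIntegrable (gradDeltaNormSq δ ρ) volume 0 t
  swap
  · rw [intervalIntegral.integral_undef h_integrable, mul_zero]
    positivity
  have hP0 : wavePairing (u 0) κ β ρ 0 = N := by
    rw [hN, wavePairing]
    change _ = torusInt _
    congr 1; ext x y; rw [h_datum, mul_zero, sub_zero]; ring
  -- This is `0 ≤ ½ ‖ρ(t) - ψ(t)‖²` for the transported datum `ψ`, which satisfies `‖ψ(t)‖² = N`.
  have hF : -(N / 2) ≤ 1 / 2 * l2normSq ρ t - wavePairing (u 0) κ β ρ t := by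
    have cρ : Cont2 (ρ t) :=
      hρ.cont.comp_continuous (f := fun p : ℝ × ℝ => (t, p)) (by fun_prop) fun p => ht
    have cψ : Cont2 fun x y => tentPer κ β y * sin (x - u 0 * t) :=
      (Cont2.of_right hφ).mul (Cont2.of_left (by fun_prop))
    have c1 : Cont2 fun x y => 1 / 2 * ρ t x y ^ 2 := by
      simpa only [pow_two] using (cρ.mul cρ).const_mul (1 / 2)
    have c2 : Cont2 fun x y => 1 / 2 * (sin (x - u 0 * t) ^ 2 * tentPer κ β y ^ 2) := by
      have := (cψ.mul cψ).const_mul (1 / 2)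
      convert this using 3; ring
    have m := torusInt_mono (cρ.mul cψ) (c1.add c2) fun x y => by
      nlinarith [sq_nonneg (ρ t x y - tentPer κ β y * sin (x - u 0 * t))]
    rw [torusInt_add c1 c2, torusInt_const_mul, torusInt_const_mul, wave_sq, ← hNM] at m
    change wavePairing (u 0) κ β ρ t ≤ 1 / 2 * l2normSq ρ t + _ at m
    linarith
  have key := intervalIntegral.sub_le_integral_of_hasDeriv_right_of_le
    (g := fun s => 1 / 2 * l2normSq ρ s - wavePairing (u 0) κ β ρ s)
    (φ := fun s => -(κ / 2) * gradDeltaNormSq δ ρ s +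
      (κ * δ / 2 * N + c_H * E * N + κ * π / h)) ht
    ((continuousOn_const.mul ((continuousOn_energy hρ).mono fun s hs => hs.1)).sub
      ((continuousOn_wavePairing hρ hφ).mono fun s hs => hs.1))
    (fun s hs => (((hρ.hasDerivAt_energy hu hs.1).const_mul (1 / 2)).sub
      (hasDerivAt_wavePairing hρ hφ hs.1)).hasDerivWithinAt)
    (by
      rw [integrableOn_Icc_iff_integrableOn_Ioc, ← intervalIntegrable_iff_integrableOn_Ioc_of_le ht]
      exact (h_integrable.const_mul _).add intervalIntegrable_const)
    (fun s hs => by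
      have b := (hρ.slice hs.1).pairing_ge hu hδ0 hκ0 (mul_pos hc_H hE0).le hlt hφ
        (fun y => by
          have := shear_mul_tent_le (β := β) hκ0 hα0 hc_H hup hH y
          rwa [← hh, hhα] at this) (u 0 * s)
      rw [← hNM] at b
      change -(κ / 2) * gradDeltaNormSq δ ρ s - (_ + _ + c_H * E / 2 * l2normSq ρ s + _) ≤ _ at b
      have d := mul_le_mul_of_nonneg_left (hρ.energy_le hu hκ0 hδ0 hs.1.le)
        (mul_pos hc_H hE0).le
      rw [← hN] at d
      linarith)
  rw [intervalIntegral.integral_add (h_integrable.const_mul _) intervalIntegrable_const,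
    intervalIntegral.integral_const_mul, intervalIntegral.integral_const, smul_eq_mul] at key
  simp only [hP0, ← hN] at key
  have k1 : κ * δ * N ≤ E * N := by
    refine mul_le_mul_of_nonneg_right ?_ hN0
    nlinarith
  have k2 : 2 * (κ * π / h) ≤ 6 * (E * N) := by
    have : κ * π / h = 3 * (E * (π * (h / 3))) := by
      rw [hκE]; field_simp
    rw [this]
    have := mul_le_mul_of_nonneg_left hNge hE0.le
    linarith
  have k3 : (κ * δ * N + 2 * (c_H * E * N) + 2 * (κ * π / h)) * t ≤
      (E * N + 2 * (c_H * E * N) + 6 * (E * N)) * t :=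
    mul_le_mul_of_nonneg_right (by linarith) ht
  calc κ * ∫ s in (0:ℝ)..t, gradDeltaNormSq δ ρ s
      ≤ (κ * δ * N + 2 * (c_H * E * N) + 2 * (κ * π / h)) * t := by linarith
    _ ≤ _ := k3
    _ = (2 * c_H + 7) * N * (E * t) := by ring

end
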